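/- Let m ≥ 2 be even and let ℓ, a, c, e be positive integers with e | m², c | m, ℓ | c, a | c, a*c | e, (e/a) | m, gcd(e/(a*c), c/a) = 1, and such that e/(a*c) is odd whenever 2 | a or 2 ∤ c. Then there exists a subgroup G of M with |G| = 2e such that: N(G) has order e; π(G) is generated by the transposition swapping the indices 1 and 2 and fixing 3; |N(G) ∩ H₁| = |N(G) ∩ H₂| = a and |N(G) ∩ H₃| = c; G ∖ N(G) contains an element of order 2ℓ; and, writing h for the number of elements of order 2 in G ∖ N(G) and k for the number of elements of G ∖ N(G) whose order does not divide m, one has (h,k) = (e/c, e/2) if 2a ∤ m; (h,k) = (e/c, 0) if 2a | m and 2a ∤ c; (h,k) = (0, e) if 2a | c and 2ℓ ∤ m; (h,k) = (0, 0) if 2a | c, 2ℓ | m and 2ℓ ∤ c; and (h,k) = (2e/c, 0) if 2a | c and 2ℓ | c. -/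

import Mathlib

/-- `V = (ZMod m)³`, written multiplicatively. -/
abbrev Vgrp (m : ℕ) : Type := Fin 3 → Multiplicative (ZMod m)

/-- The diagonal embedding `ZMod m → (ZMod m)³`. -/
def diagHom (m : ℕ) : Multiplicative (ZMod m) →* Vgrp m :=
  MonoidHom.mk' (fun t _ => t) (fun _ _ => rfl)

/-- The diagonal subgroup `Δ = {(t,t,t)}` of `(ZMod m)³`. -/
def Δgrp (m : ℕ) : Subgroup (Vgrp m) := (diagHom m).range

/-- `W = (ZMod m)³ ⧸ Δ`. -/
abbrev Wgrp (m : ℕ) : Type := Vgrp m ⧸ Δgrp m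

/-- The action of `S₃ = Equiv.Perm (Fin 3)` on `(ZMod m)³` permuting the coordinates. -/
def permV (m : ℕ) : Equiv.Perm (Fin 3) →* MulAut (Vgrp m) :=
  MonoidHom.mk'
    (fun σ => MulEquiv.arrowCongr σ (MulEquiv.refl (Multiplicative (ZMod m))))
    (fun σ τ => by ext v i; rfl)

lemma permV_map_diag (m : ℕ) (σ : Equiv.Perm (Fin 3)) :
    (Δgrp m).map (permV m σ) = Δgrp m := by
  ext v
  constructor
  · rintro ⟨_, ⟨t, rfl⟩, rfl⟩
    exact ⟨t, rfl⟩
  · rintro ⟨t, rfl⟩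
    exact ⟨diagHom m t, ⟨t, rfl⟩, rfl⟩

/-- The action of `S₃` on `W`, permuting the three coordinates (well defined since
`Δ` is invariant). -/
def permW (m : ℕ) : Equiv.Perm (Fin 3) →* MulAut (Wgrp m) :=
  MonoidHom.mk'
    (fun σ => QuotientGroup.congr (Δgrp m) (Δgrp m) (permV m σ) (permV_map_diag m σ))
    (fun σ τ => by
      ext x
      refine QuotientGroup.induction_on x (fun v => ?_)
      rfl)

/-- `M = W ⋊ S₃`. -/
abbrev Mgrp (m : ℕ) : Type := Wgrp m ⋊[permW m] Equiv.Perm (Fin 3)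

/-- `N(G) = G ∩ W`, where `W` is identified with the kernel of the projection
`π = rightHom : M → S₃` (i.e. with `W × {1} ≤ M`). -/
def NG {m : ℕ} (G : Subgroup (Mgrp m)) : Subgroup (Mgrp m) :=
  G ⊓ (SemidirectProduct.rightHom : Mgrp m →* Equiv.Perm (Fin 3)).ker

/-- The subgroup of `V = (ZMod m)³` of triples whose two coordinates with index
different from `i` are equal. -/
def HV (m : ℕ) (i : Fin 3) : Subgroup (Vgrp m) :=
  MonoidHom.ker (MonoidHom.mk' (fun v : Vgrp m => v (i + 1) / v (i + 2))
    (fun _ _ => mul_div_mul_comm _ _ _ _))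

/-- `H_i ≤ W`: classes of triples whose two coordinates with index different
from `i` are equal. -/
def Hsub (m : ℕ) (i : Fin 3) : Subgroup (Wgrp m) :=
  (HV m i).map (QuotientGroup.mk' (Δgrp m))

/-- `H_i`, identified with the subgroup `H_i × {1}` of `M`. -/
def HsubM (m : ℕ) (i : Fin 3) : Subgroup (Mgrp m) :=
  (Hsub m i).map (SemidirectProduct.inl : Wgrp m →* Mgrp m)

abbrev toV {m : ℕ} (p : ZMod m × ZMod m) : Vgrp m :=
  ![Multiplicative.ofAdd p.1, Multiplicative.ofAdd p.2, Multiplicative.ofAdd 0]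

def toW {m : ℕ} (p : ZMod m × ZMod m) : Wgrp m := QuotientGroup.mk (toV p)

lemma toW_add {m : ℕ} (p q : ZMod m × ZMod m) : toW (p + q) = toW p * toW q := by
  unfold toW
  rw [← QuotientGroup.mk_mul]
  congr 1
  ext i
  fin_cases i <;> simp [toV]

lemma mem_diag_iff {m : ℕ} (v : Vgrp m) : v ∈ Δgrp m ↔ v 0 = v 2 ∧ v 1 = v 2 := by
  constructor
  · rintro ⟨t, rfl⟩
    exact ⟨rfl, rfl⟩
  · rintro ⟨h, h'⟩
    refine ⟨v 2, ?_⟩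
    ext i
    fin_cases i
    · exact congrArg _ h.symm
    · exact congrArg _ h'.symm
    · rfl

lemma toW_injective {m : ℕ} : Function.Injective (toW (m := m)) := by
  intro p q h
  unfold toW at h
  rw [QuotientGroup.eq, mem_diag_iff] at h
  obtain ⟨h0, h1⟩ := h
  have h0' := congrArg Multiplicative.toAdd h0
  have h1' := congrArg Multiplicative.toAdd h1
  simp [toV] at h0' h1'
  ext
  · linear_combination -h0'
  · linear_combination -h1'

lemma toW_surjective {m : ℕ} : Function.Surjective (toW (m := m)) := by
  intro w
  refine QuotientGroup.induction_on w (fun v => ?_)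
  refine ⟨((v 0).toAdd - (v 2).toAdd, (v 1).toAdd - (v 2).toAdd), ?_⟩
  unfold toW
  rw [QuotientGroup.eq, mem_diag_iff]
  constructor <;> apply Multiplicative.toAdd.injective <;> simp [toV]

lemma toW_mem_H0 {m : ℕ} (p : ZMod m × ZMod m) : toW p ∈ Hsub m 0 ↔ p.2 = 0 := by
  constructor
  · rintro ⟨v, hv, h⟩
    change QuotientGroup.mk v = QuotientGroup.mk _ at h
    rw [QuotientGroup.eq, mem_diag_iff] at h
    obtain ⟨h0, h1⟩ := h
    have hv : v 1 / v 2 = 1 := hv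
    have h1' := congrArg Multiplicative.toAdd h1
    have hv' := congrArg Multiplicative.toAdd hv
    simp [toV] at h1' hv'
    linear_combination h1' + hv'
  · intro h
    refine ⟨toV p, ?_, rfl⟩
    change (toV p) 1 / (toV p) 2 = 1
    simp [toV, h]

lemma toW_mem_H1 {m : ℕ} (p : ZMod m × ZMod m) : toW p ∈ Hsub m 1 ↔ p.1 = 0 := by
  constructor
  · rintro ⟨v, hv, h⟩
    change QuotientGroup.mk v = QuotientGroup.mk _ at h
    rw [QuotientGroup.eq, mem_diag_iff] at h
    obtain ⟨h0, h1⟩ := h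
    have hv : v 2 / v 0 = 1 := hv
    have h1' := congrArg Multiplicative.toAdd h0
    have hv' := congrArg Multiplicative.toAdd hv
    simp [toV] at h1' hv'
    linear_combination h1' - hv'
  · intro h
    refine ⟨toV p, ?_, rfl⟩
    change (toV p) 2 / (toV p) 0 = 1
    simp [toV, h]

lemma toW_mem_H2 {m : ℕ} (p : ZMod m × ZMod m) : toW p ∈ Hsub m 2 ↔ p.1 = p.2 := by
  constructor
  · rintro ⟨v, hv, h⟩
    change QuotientGroup.mk v = QuotientGroup.mk _ at h
    rw [QuotientGroup.eq, mem_diag_iff] at h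
    obtain ⟨h0, h1⟩ := h
    have hv : v 0 / v 1 = 1 := hv
    have h0' := congrArg Multiplicative.toAdd h0
    have h1' := congrArg Multiplicative.toAdd h1
    have hv' := congrArg Multiplicative.toAdd hv
    simp [toV] at h0' h1' hv'
    linear_combination h0' - h1' + hv'
  · intro h
    refine ⟨toV p, ?_, rfl⟩
    change (toV p) 0 / (toV p) 1 = 1
    simp [toV, h]

lemma permW_toW {m : ℕ} (p : ZMod m × ZMod m) :
    permW m (Equiv.swap 0 1) (toW p) = toW p.swap := by
  change QuotientGroup.mk _ = QuotientGroup.mk _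
  congr 1
  ext i
  fin_cases i <;> rfl

/-- elements of `M` in coordinates -/
def toM {m : ℕ} (σ : Equiv.Perm (Fin 3)) (p : ZMod m × ZMod m) : Mgrp m := ⟨toW p, σ⟩

lemma toM_injective {m : ℕ} (σ : Equiv.Perm (Fin 3)) :
    Function.Injective (toM (m := m) σ) := by
  intro p q h
  exact toW_injective (congrArg SemidirectProduct.left h)

lemma toM_surj {m : ℕ} (g : Mgrp m) : ∃ p, g = toM g.right p := by
  obtain ⟨p, hp⟩ := toW_surjective g.left
  exact ⟨p, by ext <;> simp [toM, hp]⟩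

lemma toM_one_mul {m : ℕ} (σ : Equiv.Perm (Fin 3)) (p q : ZMod m × ZMod m) :
    toM 1 p * toM σ q = toM σ (p + q) := by
  ext <;> simp [toM, toW_add]

lemma toM_swap_mul {m : ℕ} (σ : Equiv.Perm (Fin 3)) (p q : ZMod m × ZMod m) :
    toM (Equiv.swap 0 1) p * toM σ q = toM (Equiv.swap 0 1 * σ) (p + q.swap) := by
  apply SemidirectProduct.ext
  · simp only [toM, SemidirectProduct.mul_left, toW_add, permW_toW]
  · rfl

lemma toM_zero {m : ℕ} : toM 1 (0 : ZMod m × ZMod m) = 1 := by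
  have := toM_one_mul 1 (0 : ZMod m × ZMod m) 0
  simpa using this

/-- the swap -/
abbrev τ : Equiv.Perm (Fin 3) := Equiv.swap 0 1

lemma τ_ne : τ ≠ 1 := by decide

lemma τ_mul : τ * τ = 1 := by decide

lemma toM_one_pow {m : ℕ} (p : ZMod m × ZMod m) (k : ℕ) : toM 1 p ^ k = toM 1 (k • p) := by
  induction k with
  | zero => simp [toM_zero]
  | succ k ih => rw [pow_succ, ih, toM_one_mul, succ_nsmul]

lemma orderOf_toM_one {m : ℕ} (p : ZMod m × ZMod m) :
    orderOf (toM 1 p) = addOrderOf p := by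
  apply Nat.dvd_antisymm
  · rw [orderOf_dvd_iff_pow_eq_one, toM_one_pow, addOrderOf_nsmul_eq_zero, toM_zero]
  · rw [addOrderOf_dvd_iff_nsmul_eq_zero]
    apply toM_injective 1
    rw [← toM_one_pow, pow_orderOf_eq_one, toM_zero]

lemma orderOf_toM_τ {m : ℕ} (p : ZMod m × ZMod m) :
    orderOf (toM τ p) = 2 * addOrderOf (p.1 + p.2) := by
  have h2 : (toM τ p) ^ 2 = toM 1 (p.1 + p.2, p.1 + p.2) := by
    rw [pow_two, toM_swap_mul, τ_mul]
    congr 1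
    ext
    · simp
    · simp [add_comm]
  have hd : addOrderOf ((p.1 + p.2, p.1 + p.2) : ZMod m × ZMod m) = addOrderOf (p.1 + p.2) := by
    rw [Prod.addOrderOf]; simp
  have he : 2 ∣ orderOf (toM τ p) := by
    have h := orderOf_map_dvd (SemidirectProduct.rightHom : Mgrp m →* Equiv.Perm (Fin 3)) (toM τ p)
    have : orderOf ((SemidirectProduct.rightHom : Mgrp m →* Equiv.Perm (Fin 3)) (toM τ p)) = 2 := by
      change orderOf τ = 2
      exact orderOf_eq_prime (by rw [pow_two, τ_mul]) τ_ne
    rwa [this] at h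
  have := orderOf_pow' (toM τ p) (n := 2) two_ne_zero
  rw [h2, orderOf_toM_one, hd, Nat.gcd_eq_right he] at this
  omega

/-- The torsion-defined subgroup. -/
def NN (m a p q : ℕ) : AddSubgroup (ZMod m × ZMod m) where
  carrier := {x | (a * p * q) • x.1 = 0 ∧ (a * q) • (x.1 - x.2) = 0 ∧ (a * p) • (x.1 + x.2) = 0}
  zero_mem' := by simp
  add_mem' := by
    rintro x y ⟨h1, h2, h3⟩ ⟨h1', h2', h3'⟩
    refine ⟨?_, ?_, ?_⟩
    · rw [Prod.fst_add, nsmul_add, h1, h1', add_zero]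
    · rw [Prod.fst_add, Prod.snd_add, add_sub_add_comm, nsmul_add, h2, h2', add_zero]
    · rw [Prod.fst_add, Prod.snd_add, add_add_add_comm, nsmul_add, h3, h3', add_zero]
  neg_mem' := by
    rintro x ⟨h1, h2, h3⟩
    refine ⟨?_, ?_, ?_⟩
    · rw [Prod.fst_neg, smul_neg, h1, neg_zero]
    · rw [Prod.fst_neg, Prod.snd_neg, ← neg_sub', smul_neg, h2, neg_zero]
    · rw [Prod.fst_neg, Prod.snd_neg, ← neg_add, smul_neg, h3, neg_zero]

lemma mem_NN {m a p q : ℕ} {x : ZMod m × ZMod m} : x ∈ NN m a p q ↔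
    (a * p * q) • x.1 = 0 ∧ (a * q) • (x.1 - x.2) = 0 ∧ (a * p) • (x.1 + x.2) = 0 := Iff.rfl

lemma swap_mem_NN {m a p q : ℕ} {x : ZMod m × ZMod m} (h : x ∈ NN m a p q) :
    x.swap ∈ NN m a p q := by
  rw [mem_NN] at *
  obtain ⟨h1, h2, h3⟩ := h
  simp only [nsmul_eq_mul] at *
  push_cast at *
  refine ⟨?_, ?_, ?_⟩
  · simp only [Prod.fst_swap]
    linear_combination h1 - p * h2
  · simp only [Prod.fst_swap, Prod.snd_swap]
    linear_combination - h2
  · simp only [Prod.fst_swap, Prod.snd_swap]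
    linear_combination h3

/-- The group `G`. -/
def GG (m a p q : ℕ) (s : ZMod m) (hs : (s, s) ∈ NN m a p q) : Subgroup (Mgrp m) where
  carrier := toM 1 '' (NN m a p q : Set (ZMod m × ZMod m)) ∪
    toM τ '' {x | x - (s, 0) ∈ NN m a p q}
  one_mem' := Or.inl ⟨0, zero_mem _, toM_zero⟩
  mul_mem' := by
    rintro _ _ (⟨x, hx, rfl⟩ | ⟨x, hx, rfl⟩) (⟨y, hy, rfl⟩ | ⟨y, hy, rfl⟩)
    · rw [toM_one_mul]
      exact Or.inl ⟨_, add_mem hx hy, rfl⟩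
    · rw [toM_one_mul]
      refine Or.inr ⟨_, ?_, rfl⟩
      rw [Set.mem_ofPred_eq, add_sub_assoc]
      exact add_mem hx hy
    · rw [toM_swap_mul, mul_one]
      refine Or.inr ⟨_, ?_, rfl⟩
      rw [Set.mem_ofPred_eq, add_sub_right_comm]
      exact add_mem hx (swap_mem_NN hy)
    · rw [toM_swap_mul, τ_mul]
      refine Or.inl ⟨_, ?_, rfl⟩
      rw [SetLike.mem_coe]
      have := add_mem (add_mem hx (swap_mem_NN hy)) hs
      convert this using 1
      ext
      · simp; ring
      · simp; ring
  inv_mem' := by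
    rintro _ (⟨x, hx, rfl⟩ | ⟨x, hx, rfl⟩)
    · refine Or.inl ⟨-x, neg_mem hx, ?_⟩
      rw [eq_inv_iff_mul_eq_one, toM_one_mul, neg_add_cancel, toM_zero]
    · refine Or.inr ⟨-x.swap, ?_, ?_⟩
      · have := sub_mem (neg_mem (swap_mem_NN hx)) hs
        rw [Set.mem_ofPred_eq]
        convert this using 1
        ext
        · simp
        · simp
      · rw [eq_inv_iff_mul_eq_one, toM_swap_mul, neg_add_cancel, τ_mul, toM_zero]

lemma mem_GG_one {m a p q : ℕ} {s : ZMod m} {hs : (s, s) ∈ NN m a p q} {x : ZMod m × ZMod m} :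
    toM 1 x ∈ GG m a p q s hs ↔ x ∈ NN m a p q := by
  constructor
  · rintro (⟨y, hy, h⟩ | ⟨y, hy, h⟩)
    · rw [← toM_injective _ h]; exact hy
    · exact absurd (congrArg SemidirectProduct.right h) τ_ne
  · exact fun h => Or.inl ⟨x, h, rfl⟩

lemma mem_GG_τ {m a p q : ℕ} {s : ZMod m} {hs : (s, s) ∈ NN m a p q} {x : ZMod m × ZMod m} :
    toM τ x ∈ GG m a p q s hs ↔ x - (s, 0) ∈ NN m a p q := by
  constructor
  · rintro (⟨y, hy, h⟩ | ⟨y, hy, h⟩)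
    · exact absurd (congrArg SemidirectProduct.right h).symm τ_ne
    · rw [← toM_injective _ h]; exact hy
  · exact fun h => Or.inr ⟨x, h, rfl⟩

lemma mem_NG_GG {m a p q : ℕ} {s : ZMod m} {hs : (s, s) ∈ NN m a p q} {g : Mgrp m} :
    g ∈ NG (GG m a p q s hs) ↔ g ∈ toM 1 '' (NN m a p q : Set (ZMod m × ZMod m)) := by
  constructor
  · rintro ⟨(h | ⟨y, hy, rfl⟩), h'⟩
    · exact h
    · exact absurd h' τ_ne
  · rintro ⟨x, hx, rfl⟩
    exact ⟨Or.inl ⟨x, hx, rfl⟩, rfl⟩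

lemma outer_iff {m a p q : ℕ} {s : ZMod m} {hs : (s, s) ∈ NN m a p q} {g : Mgrp m} :
    g ∈ GG m a p q s hs ∧ g ∉ NG (GG m a p q s hs) ↔
      ∃ x ∈ NN m a p q, g = toM τ (x + (s, 0)) := by
  rw [mem_NG_GG]
  constructor
  · rintro ⟨(h | ⟨y, hy, rfl⟩), h'⟩
    · exact absurd h h'
    · exact ⟨_, hy, by rw [sub_add_cancel]⟩
  · rintro ⟨x, hx, rfl⟩
    refine ⟨mem_GG_τ.2 (by rwa [add_sub_cancel_right]), ?_⟩
    rintro ⟨y, hy, h⟩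
    exact τ_ne (congrArg SemidirectProduct.right h).symm

lemma card_outer {m a p q : ℕ} {s : ZMod m} {hs : (s, s) ∈ NN m a p q} (P : ℕ → Prop) :
    Nat.card {g : Mgrp m // g ∈ GG m a p q s hs ∧ g ∉ NG (GG m a p q s hs) ∧ P (orderOf g)} =
      Nat.card {x : NN m a p q // P (2 * addOrderOf (x.1.1 + x.1.2 + s))} := by
  symm
  refine Nat.card_congr (Equiv.ofBijective
    (fun x => ⟨toM τ (x.1.1 + (s, 0)), ?_⟩) ⟨?_, ?_⟩)
  · have h := (outer_iff (hs := hs)).2 ⟨x.1.1, x.1.2, rfl⟩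
    refine ⟨h.1, h.2, ?_⟩
    rw [orderOf_toM_τ]
    convert x.2 using 3
    simp; ring
  · intro x y h
    have := toM_injective _ (congrArg Subtype.val h)
    exact Subtype.ext (Subtype.ext (add_right_cancel this))
  · rintro ⟨g, h1, h2, h3⟩
    obtain ⟨x, hx, rfl⟩ := outer_iff.1 ⟨h1, h2⟩
    refine ⟨⟨⟨x, hx⟩, ?_⟩, rfl⟩
    rw [orderOf_toM_τ] at h3
    convert h3 using 3
    simp; ring

lemma card_tors (m d : ℕ) [NeZero m] (hd : d ∣ m) :
    Nat.card {x : ZMod m // d • x = 0} = d := by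
  have := IsAddCyclic.card_nsmulAddMonoidHom_ker (ZMod m) d
  rw [Nat.card_zmod, Nat.gcd_eq_right hd] at this
  exact this

lemma tors_gcd {m : ℕ} {x : ZMod m} {d₁ d₂ d : ℕ} (h1 : d₁ • x = 0) (h2 : d₂ • x = 0)
    (h : Nat.gcd d₁ d₂ ∣ d) : d • x = 0 := by
  rw [← addOrderOf_dvd_iff_nsmul_eq_zero] at *
  exact (Nat.dvd_gcd h1 h2).trans h

lemma tors_mono {m : ℕ} {x : ZMod m} {d₁ d : ℕ} (h1 : d₁ • x = 0)
    (h : d₁ ∣ d) : d • x = 0 := by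
  rw [← addOrderOf_dvd_iff_nsmul_eq_zero] at *
  exact h1.trans h

lemma card_NN (m a p q : ℕ) [NeZero m] (hpq : Nat.Coprime p q) (hd : a * p * q ∣ m) :
    Nat.card (NN m a p q) = a * a * p * q := by
  have had : a ∣ m := (Dvd.intro _ (by ring : a * (p * q) = a * p * q)).trans hd
  let f : NN m a p q →+ ZMod m := (AddMonoidHom.fst _ _).comp (NN m a p q).subtype
  have hk : Nat.card f.ker = a := by
    refine Eq.trans ?_ (card_tors m a had)
    refine Nat.card_congr (Equiv.ofBijective (fun x => ⟨x.1.1.2, ?_⟩) ⟨?_, ?_⟩)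
    · obtain ⟨⟨⟨x, y⟩, h1, h2, h3⟩, hx⟩ := x
      change x = 0 at hx
      subst hx
      simp only [zero_sub, smul_neg, neg_eq_zero, zero_add] at h2 h3
      refine tors_gcd h2 h3 ?_
      rw [Nat.gcd_mul_left, hpq.symm.gcd_eq_one, mul_one]
    · rintro ⟨⟨⟨x, y⟩, h⟩, hx⟩ ⟨⟨⟨x', y'⟩, h'⟩, hx'⟩ h''
      change x = 0 at hx
      change x' = 0 at hx'
      simp at h''
      subst hx hx' h''
      rfl
    · rintro ⟨y, hy⟩
      refine ⟨⟨⟨(0, y), ?_, ?_, ?_⟩, rfl⟩, rfl⟩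
      · simp
      · simpa using tors_mono hy (Dvd.intro _ rfl)
      · simpa using tors_mono hy (Dvd.intro _ rfl)
  have hr : Nat.card f.range = a * p * q := by
    refine Eq.trans ?_ (card_tors m _ hd)
    refine Nat.card_congr (Equiv.subtypeEquivRight fun x => ?_)
    constructor
    · rintro ⟨⟨y, hy⟩, rfl⟩
      exact hy.1
    · intro h
      obtain ⟨u, hu⟩ := Int.isCoprime_iff_gcd_eq_one.2 (by simpa using hpq : Int.gcd p q = 1)
      obtain ⟨v, huv⟩ := hu
      -- y = w x with w = 1 - 2 u p = -1 + 2 v q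
      have huv' : (u : ZMod m) * p + v * q = 1 := by exact_mod_cast congrArg (Int.cast : ℤ → ZMod m) huv
      simp only [nsmul_eq_mul] at h
      push_cast at h
      refine ⟨⟨(x, (1 - 2 * u * p) * x), ?_, ?_, ?_⟩, rfl⟩
      · simp only [nsmul_eq_mul]; push_cast; exact h
      · simp only [nsmul_eq_mul]; push_cast
        linear_combination 2 * u * h
      · simp only [nsmul_eq_mul]; push_cast
        linear_combination 2 * v * h - 2 * a * p * x * huv'
  have := f.ker.card_mul_index
  rw [AddSubgroup.index_ker, hk, hr] at this
  rw [← this]; ring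

/-- The sum map. -/
def sumN (m a p q : ℕ) : NN m a p q →+ ZMod m :=
  (AddMonoidHom.fst (ZMod m) (ZMod m) + AddMonoidHom.snd (ZMod m) (ZMod m)).comp (NN m a p q).subtype

lemma sumN_apply {m a p q : ℕ} (x : NN m a p q) : sumN m a p q x = x.1.1 + x.1.2 := rfl

lemma card_ker_sumN (m a p q d : ℕ) [NeZero m]
    (hdm : d ∣ m) (hg : Nat.gcd (a * p * q) (2 * (a * q)) ∣ d) (hd1 : d ∣ a * p * q)
    (hd2 : d ∣ 2 * (a * q)) :
    Nat.card (sumN m a p q).ker = d := by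
  refine Eq.trans ?_ (card_tors m d hdm)
  refine Nat.card_congr (Equiv.ofBijective (fun x => ⟨x.1.1.1, ?_⟩) ⟨?_, ?_⟩)
  · obtain ⟨⟨⟨x, y⟩, h1, h2, h3⟩, hx⟩ := x
    change x + y = 0 at hx
    refine tors_gcd h1 ?_ hg
    obtain rfl : y = -x := by linear_combination hx
    simp only [nsmul_eq_mul] at h2 ⊢
    push_cast at h2 ⊢
    linear_combination h2
  · rintro ⟨⟨⟨x, y⟩, h⟩, hx⟩ ⟨⟨⟨x', y'⟩, h'⟩, hx'⟩ h''
    change x + y = 0 at hx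
    change x' + y' = 0 at hx'
    simp at h''
    subst h''
    have : y = y' := by linear_combination hx - hx'
    subst this
    rfl
  · rintro ⟨x, hx⟩
    refine ⟨⟨⟨(x, -x), ?_, ?_, ?_⟩, ?_⟩, rfl⟩
    · exact tors_mono hx hd1
    · have := tors_mono hx hd2
      simp only [nsmul_eq_mul] at this ⊢
      push_cast at this ⊢
      linear_combination this
    · simp
    · rw [AddMonoidHom.mem_ker, sumN_apply]; simp

lemma range_sumN (m a p q k d : ℕ) [NeZero m] (hpq : Nat.Coprime p q) (hd : a * p * q ∣ m)
    (hk : Nat.card (sumN m a p q).ker = k) (hkd : k * d = a * a * p * q) (hdm : d ∣ m)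
    (hle : ∀ x, d • sumN m a p q x = 0) (t : ZMod m) :
    (∃ x, sumN m a p q x = t) ↔ d • t = 0 := by
  have hc := (sumN m a p q).ker.card_mul_index
  have hk0 : 0 < k := by rw [← hk]; exact Nat.card_pos
  rw [AddSubgroup.index_ker, hk, card_NN m a p q hpq hd, ← hkd] at hc
  have hc := Nat.eq_of_mul_eq_mul_left hk0 hc
  let D : AddSubgroup (ZMod m) := (nsmulAddMonoidHom d : ZMod m →+ ZMod m).ker
  have hD : Nat.card D = d := card_tors m d hdm
  have hsub : (sumN m a p q).range ≤ D := by
    rintro _ ⟨x, rfl⟩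
    exact hle x
  have := AddSubgroup.eq_of_le_of_card_ge hsub (by rw [hc, hD])
  change t ∈ (sumN m a p q).range ↔ t ∈ D
  rw [this]

lemma card_fiber {A B : Type*} [AddCommGroup A] [AddCommGroup B] (f : A →+ B) (x₀ : A) :
    Nat.card {x : A // f x = f x₀} = Nat.card f.ker := by
  refine Nat.card_congr ((Equiv.subRight x₀).subtypeEquiv fun x => ?_)
  rw [AddMonoidHom.mem_ker, Equiv.subRight_apply, map_sub, sub_eq_zero]

lemma card_half {A B : Type*} [AddCommGroup A] [Finite A] [AddCommGroup B] (f : A →+ B) (b z : B)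
    (hz : z ≠ 0) (hz2 : z + z = 0) (hb : b = 0 ∨ b = z) (hf : ∀ x, f x = 0 ∨ f x = z)
    (x₀ : A) (h0 : f x₀ = z) :
    2 * Nat.card {x : A // f x + b ≠ 0} = Nat.card A := by
  have key : ∀ x, f x + b ≠ 0 ↔ f (x + x₀) + b = 0 := by
    intro x
    rw [map_add, h0]
    rcases hb with rfl | rfl <;> rcases hf x with h | h <;> simp [h, hz, hz2]
  have h1 : Nat.card {x : A // f x + b ≠ 0} = Nat.card {x : A // f x + b = 0} :=
    Nat.card_congr ((Equiv.addRight x₀).subtypeEquiv fun x => key x)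
  classical
  have h2 := Nat.card_congr (Equiv.sumCompl (fun x : A => f x + b = 0))
  rw [Nat.card_sum] at h2
  rw [two_mul]
  nth_rw 1 [h1]
  exact h2

lemma card_NG_GG {m a p q : ℕ} {s : ZMod m} {hs : (s, s) ∈ NN m a p q} :
    Nat.card (NG (GG m a p q s hs)) = Nat.card (NN m a p q) := by
  symm
  refine Nat.card_congr (Equiv.ofBijective
    (fun x => ⟨toM 1 x.1, mem_NG_GG.2 ⟨_, x.2, rfl⟩⟩) ⟨?_, ?_⟩)
  · intro x y h
    exact Subtype.ext (toM_injective _ (congrArg Subtype.val h))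
  · rintro ⟨g, hg⟩
    obtain ⟨x, hx, rfl⟩ := mem_NG_GG.1 hg
    exact ⟨⟨x, hx⟩, rfl⟩

lemma card_GG {m a p q : ℕ} [NeZero m] {s : ZMod m} {hs : (s, s) ∈ NN m a p q} :
    Nat.card (GG m a p q s hs) = 2 * Nat.card (NN m a p q) := by
  have h : Nat.card (GG m a p q s hs) = Nat.card (NN m a p q ⊕ NN m a p q) := by
    symm
    refine Nat.card_congr (Equiv.ofBijective
      (Sum.elim (fun x => ⟨toM 1 x.1, mem_GG_one.2 x.2⟩)
        (fun x => ⟨toM τ (x.1 + (s, 0)), (outer_iff.2 ⟨_, x.2, rfl⟩).1⟩)) ⟨?_, ?_⟩)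
    · rintro (x | x) (y | y) h
      · exact congrArg _ (Subtype.ext (toM_injective _ (congrArg Subtype.val h)))
      · exact absurd (congrArg SemidirectProduct.right (congrArg Subtype.val h)).symm τ_ne
      · exact absurd (congrArg SemidirectProduct.right (congrArg Subtype.val h)) τ_ne
      · exact congrArg _ (Subtype.ext (add_right_cancel (toM_injective _ (congrArg Subtype.val h))))
    · rintro ⟨g, hg⟩
      by_cases h : g ∈ NG (GG m a p q s hs)
      · obtain ⟨x, hx, rfl⟩ := mem_NG_GG.1 h
        exact ⟨Sum.inl ⟨x, hx⟩, rfl⟩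
      · obtain ⟨x, hx, rfl⟩ := outer_iff.1 ⟨hg, h⟩
        exact ⟨Sum.inr ⟨x, hx⟩, rfl⟩
  rw [h, Nat.card_sum, two_mul]

lemma map_GG {m a p q : ℕ} {s : ZMod m} {hs : (s, s) ∈ NN m a p q} :
    (GG m a p q s hs).map (SemidirectProduct.rightHom : Mgrp m →* Equiv.Perm (Fin 3)) =
        Subgroup.zpowers (Equiv.swap (0 : Fin 3) 1) := by
  apply le_antisymm
  · rintro _ ⟨g, (⟨x, hx, rfl⟩ | ⟨x, hx, rfl⟩), rfl⟩
    · exact one_mem _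
    · exact Subgroup.mem_zpowers _
  · rw [Subgroup.zpowers_le]
    exact ⟨toM τ (s, 0), mem_GG_τ.2 (by rw [sub_self]; exact zero_mem _), rfl⟩

lemma card_NG_H {m a p q : ℕ} {s : ZMod m} {hs : (s, s) ∈ NN m a p q} (i : Fin 3) :
    Nat.card ↥(NG (GG m a p q s hs) ⊓ HsubM m i) =
      Nat.card {x : ZMod m × ZMod m // x ∈ NN m a p q ∧ toW x ∈ Hsub m i} := by
  symm
  refine Nat.card_congr (Equiv.ofBijective
    (fun x => ⟨toM 1 x.1, mem_NG_GG.2 ⟨_, x.2.1, rfl⟩, ⟨_, x.2.2, rfl⟩⟩) ⟨?_, ?_⟩)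
  · intro x y h
    exact Subtype.ext (toM_injective _ (congrArg Subtype.val h))
  · rintro ⟨g, hg, hg'⟩
    obtain ⟨x, hx, rfl⟩ := mem_NG_GG.1 hg
    obtain ⟨w, hw, h⟩ := hg'
    have : w = toW x := congrArg SemidirectProduct.left h
    exact ⟨⟨x, hx, this ▸ hw⟩, rfl⟩

lemma card_H0 {m a p q : ℕ} [NeZero m] {s : ZMod m} {hs : (s, s) ∈ NN m a p q}
    (hpq : Nat.Coprime p q) (ham : a ∣ m) :
    Nat.card ↥(NG (GG m a p q s hs) ⊓ HsubM m 0) = a := by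
  rw [card_NG_H]
  refine Eq.trans ?_ (card_tors m a ham)
  symm
  refine Nat.card_congr (Equiv.ofBijective
    (fun x => ⟨(x.1, 0), ⟨?_, ?_, ?_⟩, (toW_mem_H0 _).2 rfl⟩) ⟨?_, ?_⟩)
  · exact tors_mono x.2 (Dvd.intro _ (mul_assoc _ _ _).symm)
  · simpa using tors_mono x.2 (Dvd.intro _ rfl)
  · simpa using tors_mono x.2 (Dvd.intro _ rfl)
  · intro x y h
    exact Subtype.ext (congrArg (fun z => z.1.1) h)
  · rintro ⟨⟨x, y⟩, ⟨h1, h2, h3⟩, h⟩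
    obtain rfl : y = 0 := (toW_mem_H0 _).1 h
    simp only [sub_zero, add_zero] at h2 h3
    refine ⟨⟨x, tors_gcd h2 h3 ?_⟩, rfl⟩
    rw [Nat.gcd_mul_left, hpq.symm.gcd_eq_one, mul_one]

lemma card_H1 {m a p q : ℕ} [NeZero m] {s : ZMod m} {hs : (s, s) ∈ NN m a p q}
    (hpq : Nat.Coprime p q) (ham : a ∣ m) :
    Nat.card ↥(NG (GG m a p q s hs) ⊓ HsubM m 1) = a := by
  refine Eq.trans ?_ (card_H0 (hs := hs) hpq ham)
  rw [card_NG_H, card_NG_H]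
  refine Nat.card_congr ((Equiv.prodComm _ _).subtypeEquiv fun x => ?_)
  rw [toW_mem_H0, toW_mem_H1]
  exact and_congr_left' ⟨swap_mem_NN, fun h => by simpa using swap_mem_NN h⟩

lemma card_H2 {m a p q : ℕ} [NeZero m] {s : ZMod m} {hs : (s, s) ∈ NN m a p q}
    (hq : Odd q) (ham : a * p ∣ m) :
    Nat.card ↥(NG (GG m a p q s hs) ⊓ HsubM m 2) = a * p := by
  rw [card_NG_H]
  refine Eq.trans ?_ (card_tors m _ ham)
  symm
  refine Nat.card_congr (Equiv.ofBijective
    (fun x => ⟨(x.1, x.1), ⟨?_, ?_, ?_⟩, (toW_mem_H2 _).2 rfl⟩) ⟨?_, ?_⟩)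
  · exact tors_mono x.2 (Dvd.intro _ rfl)
  · simp
  · rw [smul_add, x.2, add_zero]
  · intro x y h
    exact Subtype.ext (congrArg (fun z => z.1.1) h)
  · rintro ⟨⟨x, y⟩, ⟨h1, h2, h3⟩, h⟩
    obtain rfl : x = y := (toW_mem_H2 _).1 h
    refine ⟨⟨x, tors_gcd h1 (d₂ := a * p * 2) ?_ ?_⟩, rfl⟩
    · rw [mul_smul, two_smul]; exact h3
    · rw [Nat.gcd_mul_left, Nat.Coprime.gcd_eq_one, mul_one]
      exact Nat.coprime_two_right.2 hq

lemma nsmul_s0 {m l : ℕ} (hm : 0 < m) (hl : l ∣ m) (k : ℕ) :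
    k • ((m / l : ℕ) : ZMod m) = 0 ↔ l ∣ k := by
  obtain ⟨d, rfl⟩ := hl
  have hl0 : 0 < l := Nat.pos_of_mul_pos_right hm
  have hd0 : 0 < d := Nat.pos_of_mul_pos_left hm
  rw [Nat.mul_div_cancel_left _ hl0, nsmul_eq_mul, ← Nat.cast_mul, ZMod.natCast_eq_zero_iff]
  exact Nat.mul_dvd_mul_iff_right hd0

lemma addOrderOf_s0 {m l : ℕ} (hm : 0 < m) (hl : l ∣ m) :
    addOrderOf ((m / l : ℕ) : ZMod m) = l := by
  apply Nat.dvd_antisymm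
  · rw [addOrderOf_dvd_iff_nsmul_eq_zero, nsmul_s0 hm hl]
  · rw [← nsmul_s0 hm hl]; exact addOrderOf_nsmul_eq_zero _

lemma count_h {m a p q : ℕ} {s : ZMod m} {hs : (s, s) ∈ NN m a p q} :
    Nat.card {g : Mgrp m // g ∈ GG m a p q s hs ∧ g ∉ NG (GG m a p q s hs) ∧ orderOf g = 2} =
      Nat.card {x : NN m a p q // sumN m a p q x = -s} := by
  rw [card_outer (fun n => n = 2)]
  refine Nat.card_congr (Equiv.subtypeEquivRight fun x => ?_)
  rw [sumN_apply, ← add_eq_zero_iff_eq_neg, ← AddMonoid.addOrderOf_eq_one_iff]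
  omega

lemma count_k {m a p q m' : ℕ} (hm' : m = 2 * m') {s : ZMod m} {hs : (s, s) ∈ NN m a p q} :
    Nat.card {g : Mgrp m // g ∈ GG m a p q s hs ∧ g ∉ NG (GG m a p q s hs) ∧ ¬ orderOf g ∣ m} =
      Nat.card {x : NN m a p q // m' • sumN m a p q x + m' • s ≠ 0} := by
  rw [card_outer (fun n => ¬ n ∣ m)]
  refine Nat.card_congr (Equiv.subtypeEquivRight fun x => ?_)
  rw [sumN_apply, ← smul_add, ne_eq, ← addOrderOf_dvd_iff_nsmul_eq_zero]
  generalize addOrderOf (x.1.1 + x.1.2 + s) = n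
  subst hm'
  exact not_congr (Nat.mul_dvd_mul_iff_left two_pos)

/-- Proposition 3.4(i) of Dalla Volta–Montanucci–Zini (`q` odd, `m = q+1` even):
existence part. `h` counts the elements of order 2 in `G ∖ N(G)` (those of type (A)),
`k` counts the elements of `G ∖ N(G)` whose order does not divide `m` (type (B2)). -/
theorem stmt8 (m : ℕ) (hm : 2 ≤ m) (hmeven : 2 ∣ m) (l a c e : ℕ)
    (hl0 : 0 < l) (ha0 : 0 < a) (hc0 : 0 < c) (he0 : 0 < e)
    (h1 : e ∣ m ^ 2) (h2 : c ∣ m) (h3 : l ∣ c) (h4 : a ∣ c) (h5 : a * c ∣ e)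
    (h6 : e / a ∣ m) (h7 : Nat.gcd (e / (a * c)) (c / a) = 1)
    (h8 : 2 ∣ a ∨ ¬ 2 ∣ c → Odd (e / (a * c))) :
    ∃ G : Subgroup (Mgrp m),
      Nat.card ↥G = 2 * e ∧
      Nat.card ↥(NG G) = e ∧
      G.map (SemidirectProduct.rightHom : Mgrp m →* Equiv.Perm (Fin 3)) =
        Subgroup.zpowers (Equiv.swap (0 : Fin 3) 1) ∧
      Nat.card ↥(NG G ⊓ HsubM m 0) = a ∧
      Nat.card ↥(NG G ⊓ HsubM m 1) = a ∧
      Nat.card ↥(NG G ⊓ HsubM m 2) = c ∧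
      (∃ β ∈ G, β ∉ NG G ∧ orderOf β = 2 * l) ∧
      (let h := Nat.card {x : Mgrp m // x ∈ G ∧ x ∉ NG G ∧ orderOf x = 2}
       let k := Nat.card {x : Mgrp m // x ∈ G ∧ x ∉ NG G ∧ ¬ orderOf x ∣ m}
       (¬ 2 * a ∣ m → h = e / c ∧ k = e / 2) ∧
       (2 * a ∣ m → ¬ 2 * a ∣ c → h = e / c ∧ k = 0) ∧
       (2 * a ∣ c → ¬ 2 * l ∣ m → h = 0 ∧ k = e) ∧
       (2 * a ∣ c → 2 * l ∣ m → ¬ 2 * l ∣ c → h = 0 ∧ k = 0) ∧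
       (2 * a ∣ c → 2 * l ∣ c → h = 2 * e / c ∧ k = 0)) := by
  have : NeZero m := ⟨by omega⟩
  have hm0 : 0 < m := by omega
  obtain ⟨p, rfl⟩ := h4
  obtain ⟨q, rfl⟩ := h5
  have hp0 : 0 < p := Nat.pos_of_mul_pos_left hc0
  have hac0 : 0 < a * (a * p) := Nat.mul_pos ha0 hc0
  have hq0 : 0 < q := Nat.pos_of_mul_pos_left he0
  have e1 : a * (a * p) * q / a = a * p * q := by
    rw [show a * (a * p) * q = a * (a * p * q) by ring, Nat.mul_div_cancel_left _ ha0]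
  have e2 : a * (a * p) * q / (a * p) = a * q := by
    rw [show a * (a * p) * q = (a * p) * (a * q) by ring, Nat.mul_div_cancel_left _ hc0]
  have e3 : 2 * (a * (a * p) * q) / (a * p) = 2 * (a * q) := by
    rw [show 2 * (a * (a * p) * q) = (a * p) * (2 * (a * q)) by ring,
      Nat.mul_div_cancel_left _ hc0]
  rw [Nat.mul_div_cancel_left _ hac0] at h7 h8
  rw [Nat.mul_div_cancel_left _ ha0] at h7
  rw [e1] at h6
  rw [e2, e3]
  have hpq : Nat.Coprime p q := (Nat.coprime_iff_gcd_eq_one.2 h7).symm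
  have hq : Odd q := by
    by_cases h : 2 ∣ a ∨ ¬ 2 ∣ a * p
    · exact h8 h
    · push Not at h
      have h2p : 2 ∣ p := (Nat.prime_two.dvd_mul.1 h.2).resolve_left h.1
      exact Nat.coprime_two_left.1 (hpq.coprime_dvd_left h2p)
  have ham : a ∣ m := (Dvd.intro _ rfl).trans h2
  have hlm : l ∣ m := h3.trans h2
  set s : ZMod m := ((m / l : ℕ) : ZMod m) with hs_def
  have hsl : ∀ k : ℕ, k • s = 0 ↔ l ∣ k := nsmul_s0 hm0 hlm
  have hs : (s, s) ∈ NN m a p q := by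
    have : (a * p) • s = 0 := (hsl _).2 h3
    refine ⟨tors_mono this (Dvd.intro _ rfl), by simp, ?_⟩
    simp only [smul_add, this, add_zero]
  have hcard : Nat.card (NN m a p q) = a * (a * p) * q := by
    rw [card_NN m a p q hpq h6]; ring
  obtain ⟨m', hm'⟩ := hmeven
  refine ⟨GG m a p q s hs, by rw [card_GG, hcard], by rw [card_NG_GG, hcard], map_GG,
    card_H0 hpq ham, card_H1 hpq ham, card_H2 hq h2, ?_, ?_⟩
  · have h := (outer_iff (hs := hs)).2 ⟨0, zero_mem _, rfl⟩
    refine ⟨_, h.1, h.2, ?_⟩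
    rw [orderOf_toM_τ]
    simp [hs_def, addOrderOf_s0 hm0 hlm]
  rw [count_h, count_k hm']
  intro h k
  rcases Nat.even_or_odd' p with ⟨p', hp' | hp'⟩
  · -- `p` even
    have hap : a * p' * 2 = a * p := by rw [hp']; ring
    have h2ac : 2 * a ∣ a * p := ⟨p', by rw [hp']; ring⟩
    have h2m : 2 * a ∣ m := h2ac.trans h2
    have hle : ∀ x, (a * p') • sumN m a p q x = 0 := by
      rintro ⟨⟨x, y⟩, h1, h2, h3⟩
      rw [sumN_apply]
      refine tors_gcd (d₁ := a * p' * q) (d₂ := a * p' * 2) ?_ ?_ ?_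
      · rw [hp'] at h1
        simp only [nsmul_eq_mul] at h1 h2 ⊢
        push_cast at h1 h2 ⊢
        linear_combination h1 - p' * h2
      · rw [hap]; exact h3
      · rw [Nat.gcd_mul_left, Nat.Coprime.gcd_eq_one, mul_one]
        exact Nat.coprime_two_right.2 hq
    have hker : Nat.card (sumN m a p q).ker = 2 * (a * q) := by
      have hd : 2 * (a * q) ∣ a * p * q := ⟨p', by rw [hp']; ring⟩
      exact card_ker_sumN m a p q _ (hd.trans h6) (Nat.gcd_dvd_right _ _) hd dvd_rfl
    have hrange := range_sumN m a p q _ (a * p') hpq h6 hker (by rw [hp']; ring)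
      ((Dvd.intro _ hap).trans h2) hle
    have hm'p : a * p' ∣ m' := by
      have : 2 * (a * p') ∣ 2 * m' := by rw [← hm', mul_comm, hap]; exact h2
      exact Nat.dvd_of_mul_dvd_mul_left two_pos this
    have hkk : k = Nat.card {x : NN m a p q // m' • s ≠ 0} := by
      refine Nat.card_congr (Equiv.subtypeEquivRight fun x => ?_)
      rw [tors_mono (hle x) hm'p, zero_add]
    have h2l : m' • s = 0 ↔ 2 * l ∣ m := by
      rw [hsl, hm']
      exact (Nat.mul_dvd_mul_iff_left two_pos).symm
    have hk0 : 2 * l ∣ m → k = 0 := by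
      intro hh
      rw [hkk]
      have := h2l.2 hh
      simp [this]
    have hl2 : (a * p') • (-s) = 0 ↔ 2 * l ∣ a * p := by
      rw [smul_neg, neg_eq_zero, hsl, ← hap, mul_comm _ 2]
      exact (Nat.mul_dvd_mul_iff_left two_pos).symm
    have hh0 : ¬ 2 * l ∣ a * p → h = 0 := by
      intro hh
      have : IsEmpty {x : NN m a p q // sumN m a p q x = -s} := by
        refine ⟨fun x => hh (hl2.1 ((hrange _).1 ⟨x.1, x.2⟩))⟩
      exact Nat.card_of_isEmpty
    refine ⟨fun hh => absurd h2m hh, fun _ hh => absurd h2ac hh, fun _ hh => ?_,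
      fun _ hh hh' => ⟨hh0 hh', hk0 hh⟩, fun _ hh => ⟨?_, hk0 (hh.trans h2)⟩⟩
    · refine ⟨hh0 fun h' => hh (h'.trans h2), ?_⟩
      rw [hkk, ← hcard]
      have : m' • s ≠ 0 := fun h' => hh (h2l.1 h')
      exact Nat.card_congr (Equiv.subtypeUnivEquiv fun _ => this)
    · obtain ⟨x₀, hx₀⟩ := (hrange _).2 (hl2.2 hh)
      rw [← hker, ← card_fiber _ x₀, hx₀]
  · -- `p` odd
    have hpo : Odd p := ⟨p', hp'⟩
    have h2ac : ¬ 2 * a ∣ a * p := by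
      rw [mul_comm 2 a, Nat.mul_dvd_mul_iff_left ha0]
      omega
    have hle : ∀ x, (a * p) • sumN m a p q x = 0 := fun x => x.2.2.2
    have hker : Nat.card (sumN m a p q).ker = a * q := by
      have hd : a * q ∣ a * p * q := ⟨p, by ring⟩
      refine card_ker_sumN m a p q _ (hd.trans h6) ?_ hd (Dvd.intro_left _ rfl)
      rw [show a * p * q = p * (a * q) by ring, Nat.gcd_mul_right,
        (Nat.coprime_two_right.2 hpo).gcd_eq_one, one_mul]
    have hrange := range_sumN m a p q _ (a * p) hpq h6 hker (by ring) h2 hle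
    have hh : h = a * q := by
      obtain ⟨x₀, hx₀⟩ := (hrange (-s)).2 (by rw [smul_neg, neg_eq_zero, hsl]; exact h3)
      rw [← hker, ← card_fiber _ x₀, hx₀]
    refine ⟨fun h2a => ⟨hh, ?_⟩, fun h2a _ => ⟨hh, ?_⟩, fun hh => absurd hh h2ac,
      fun hh => absurd hh h2ac, fun hh => absurd hh h2ac⟩
    · have hhalf : ∀ t : ZMod m, m' • t = 0 ∨ m' • t = (m' : ZMod m) := by
        intro t
        have hmm : (2 : ZMod m) * m' = 0 := by
          have := (ZMod.natCast_eq_zero_iff (2 * m') m).2 (by rw [← hm'])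
          exact_mod_cast this
        obtain ⟨n, rfl⟩ := ZMod.natCast_zmod_surjective t
        rw [nsmul_eq_mul]
        rcases Nat.even_or_odd' n with ⟨n', hn | hn⟩
        · left; rw [hn]; push_cast; linear_combination n' * hmm
        · right; rw [hn]; push_cast; linear_combination n' * hmm
      have hz2 : (m' : ZMod m) + m' = 0 := by
        have := (ZMod.natCast_eq_zero_iff (m' + m') m).2 (by rw [← two_mul, ← hm'])
        exact_mod_cast this
      have hz : (m' : ZMod m) ≠ 0 := by
        rw [ne_eq, ZMod.natCast_eq_zero_iff]
        intro hd
        have := Nat.le_of_dvd (by omega) hd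
        omega
      obtain ⟨x₀, hx₀⟩ := (hrange ((m / (a * p) : ℕ) : ZMod m)).2 ((nsmul_s0 hm0 h2 _).2 dvd_rfl)
      have hx₁ : m' • sumN m a p q x₀ = (m' : ZMod m) := by
        refine (hhalf _).resolve_left fun h0 => h2a ?_
        rw [hx₀, nsmul_s0 hm0 h2] at h0
        rw [hm']
        exact mul_dvd_mul_left 2 ((Dvd.intro _ rfl).trans h0)
      have := card_half (m' • sumN m a p q) (m' • s) (m' : ZMod m) hz hz2 (hhalf s)
        (fun x => hhalf _) x₀ hx₁
      rw [hcard] at this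
      change 2 * k = _ at this
      omega
    · obtain ⟨r, hr⟩ := h6
      have hdvd : a * p ∣ m' := by
        have h' : 2 ∣ p * q * r := by
          rw [hr, mul_comm 2 a, show a * p * q * r = a * (p * q * r) by ring,
            Nat.mul_dvd_mul_iff_left ha0] at h2a
          exact h2a
        have h2r : 2 ∣ r := by
          refine Nat.Coprime.dvd_of_dvd_mul_left ?_ h'
          exact Nat.coprime_two_left.2 (hpo.mul hq)
        obtain ⟨r', rfl⟩ := h2r
        refine ⟨q * r', ?_⟩
        have : 2 * m' = 2 * (a * p * (q * r')) := by rw [← hm', hr]; ring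
        omega
      have : ∀ x, m' • sumN m a p q x + m' • s = 0 := by
        intro x
        rw [tors_mono (hle x) hdvd, zero_add, hsl]
        exact h3.trans hdvd
      have : IsEmpty {x : NN m a p q // m' • sumN m a p q x + m' • s ≠ 0} :=
        ⟨fun x => x.2 (this x.1)⟩
      exact Nat.card_of_isEmpty
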